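/- (f̄-separation of Feldman patterns.) Let T, N, M, L be positive integers with N ≥ 20 and M ≥ 2, and let A₁,…,A_N be strings of equal length L over an alphabet Σ. For 1 ≤ j ≤ M let B_j be the (T,N,M)-Feldman pattern of type j in the building blocks A₁,…,A_N. Assume α ∈ (0, 1/7), R ≥ 2, and f̄(C,D) > α for all substrings C and D consisting of consecutive symbols from A_{i₁} and A_{i₂}, respectively, where i₁ ≠ i₂, with |C|, |D| ≥ L/R. Then for all j, k ∈ {1,…,M} with j ≠ k and all substrings B and B̄ of at least T·N^{2M+2}·L consecutive symbols from B_j and B_k, respectively, we have f̄(B, B̄) ≥ α − 4/√N − 1/R. -/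

import Mathlib

/-- A match between two strings `a` and `b`: a finite set of pairs of (0-based) indices,
strictly increasing in both coordinates simultaneously, matching equal symbols. -/
def IsMatch {α : Type*} (a b : List α) (M : Finset (ℕ × ℕ)) : Prop :=
  (∀ p ∈ M, p.1 < a.length ∧ p.2 < b.length ∧ a[p.1]? = b[p.2]?) ∧
  (∀ p ∈ M, ∀ q ∈ M, (p.1 < q.1 ↔ p.2 < q.2))

/-- The maximal cardinality of a match between `a` and `b`. -/
noncomputable def maxMatch {α : Type*} (a b : List α) : ℕ :=
  sSup {r : ℕ | ∃ M : Finset (ℕ × ℕ), IsMatch a b M ∧ M.card = r}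

/-- The `f̄` distance between two strings:
`f̄(a,b) = 1 - 2 · max{|M| : M a match between a and b} / (|a| + |b|)`. -/
noncomputable def fbar {α : Type*} (a b : List α) : ℝ :=
  1 - 2 * (maxMatch a b : ℝ) / ((a.length : ℝ) + (b.length : ℝ))

/-- `k`-fold concatenation of the string `w` with itself. -/
def repeatList {α : Type*} (w : List α) (k : ℕ) : List α := (List.replicate k w).flatten

/-- The `(T,N,M)`-Feldman pattern of type `r` in the building blocks `A 1, …, A N`:
`B_r = (A₁^{T·N^{2r}} A₂^{T·N^{2r}} ⋯ A_N^{T·N^{2r}})^{N^{2(M+1−r)}}`. -/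
def feldmanPattern {α : Type*} (T N M : ℕ) (A : ℕ → List α) (r : ℕ) : List α :=
  repeatList ((List.range N).map (fun i => repeatList (A (i + 1)) (T * N ^ (2 * r)))).flatten
    (N ^ (2 * (M + 1 - r)))

theorem isMatch_card_le {α : Type*} {a b : List α} {M : Finset (ℕ × ℕ)} (h : IsMatch a b M) :
    M.card ≤ a.length := by
  have : M.card ≤ (Finset.range a.length).card := by
    apply Finset.card_le_card_of_injOn Prod.fst
    · intro p hp
      simpa using (h.1 p hp).1
    · intro p hp q hq hpq
      have h1 := h.2 p hp q hq
      have h2 := h.2 q hq p hp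
      ext
      · exact hpq
      · omega
  simpa using this

theorem card_le_maxMatch {α : Type*} {a b : List α} {M : Finset (ℕ × ℕ)} (h : IsMatch a b M) :
    M.card ≤ maxMatch a b := by
  apply le_csSup
  · refine ⟨a.length, ?_⟩
    rintro r ⟨M', h', rfl⟩
    exact isMatch_card_le h'
  · exact ⟨M, h, rfl⟩

theorem exists_maxMatch {α : Type*} (a b : List α) :
    ∃ M : Finset (ℕ × ℕ), IsMatch a b M ∧ M.card = maxMatch a b := by
  have : maxMatch a b ∈ {r : ℕ | ∃ M : Finset (ℕ × ℕ), IsMatch a b M ∧ M.card = r} := by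
    apply Nat.sSup_mem
    · exact ⟨0, ∅, by simp [IsMatch], rfl⟩
    · refine ⟨a.length, ?_⟩
      rintro r ⟨M', h', rfl⟩
      exact isMatch_card_le h'
  exact this

theorem maxMatch_le_swap {α : Type*} (a b : List α) : maxMatch a b ≤ maxMatch b a := by
  obtain ⟨M, hM, hc⟩ := exists_maxMatch a b
  rw [← hc, ← Finset.card_map (Equiv.prodComm ℕ ℕ).toEmbedding]
  apply card_le_maxMatch
  constructor
  · intro p hp
    simp only [Finset.mem_map_equiv] at hp
    have := hM.1 _ hp
    exact ⟨this.2.1, this.1, this.2.2.symm⟩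
  · intro p hp q hq
    simp only [Finset.mem_map_equiv] at hp hq
    exact (hM.2 _ hp _ hq).symm

theorem fbar_swap {α : Type*} (a b : List α) : fbar a b = fbar b a := by
  unfold fbar
  rw [le_antisymm (maxMatch_le_swap a b) (maxMatch_le_swap b a), add_comm]

/-- Hulls of the fibres of a monotone labelling are disjoint. -/
theorem hull_lemma {β : Type*} (M : Finset β) (f g : β → ℕ) (s n : ℕ)
    (hf : ∀ p ∈ M, s ≤ f p ∧ f p < s + n)
    (hmono : ∀ p ∈ M, ∀ q ∈ M, g p < g q → f p < f q) :
    ∃ lo hi : ℕ → ℕ, (∀ p ∈ M, lo (g p) ≤ f p ∧ f p < hi (g p)) ∧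
      (∀ l ∈ M.image g, (∃ p ∈ M, g p = l ∧ f p = lo l) ∧ (∃ p ∈ M, g p = l ∧ f p + 1 = hi l)) ∧
      ∑ l ∈ M.image g, (hi l - lo l) ≤ n := by
  classical
  have key : ∀ l, ∃ a b : ℕ, l ∈ M.image g →
      (∀ p ∈ M, g p = l → a ≤ f p ∧ f p < b) ∧ (∃ p ∈ M, g p = l ∧ f p = a) ∧
      (∃ p ∈ M, g p = l ∧ f p + 1 = b) := by
    intro l
    by_cases hl : l ∈ M.image g
    · have hne : (M.filter (fun p => g p = l)).Nonempty := by
        obtain ⟨p, hp, hpl⟩ := Finset.mem_image.1 hl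
        exact ⟨p, by simp [hp, hpl]⟩
      obtain ⟨p, hp, hpm⟩ := Finset.exists_min_image _ f hne
      obtain ⟨q, hq, hqm⟩ := Finset.exists_max_image _ f hne
      simp only [Finset.mem_filter] at hp hq hpm hqm
      refine ⟨f p, f q + 1, fun _ => ⟨?_, ⟨p, hp.1, hp.2, rfl⟩, ⟨q, hq.1, hq.2, rfl⟩⟩⟩
      intro x hx hxl
      have h1 := hpm x ⟨hx, hxl⟩
      have h2 := hqm x ⟨hx, hxl⟩
      omega
    · exact ⟨0, 0, fun h => absurd h hl⟩
  choose lo hi h using key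
  refine ⟨lo, hi, ?_, fun l hl => (h l hl).2, ?_⟩
  · intro p hp
    exact (h (g p) (Finset.mem_image_of_mem _ hp)).1 p hp rfl
  · have hdis : ∀ l ∈ M.image g, ∀ l' ∈ M.image g, l < l' →
        Disjoint (Finset.Ico (lo l) (hi l)) (Finset.Ico (lo l') (hi l')) := by
      intro l hl l' hl' hlt
      obtain ⟨_, _, ⟨p, hp, hpl, hpf⟩⟩ := h l hl
      obtain ⟨_, ⟨q, hq, hql, hqf⟩, _⟩ := h l' hl'
      have := hmono p hp q hq (by omega)
      rw [Finset.disjoint_left]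
      intro x hx hx'
      simp only [Finset.mem_Ico] at hx hx'
      omega
    have hc : ∑ l ∈ M.image g, (hi l - lo l)
        = ((M.image g).biUnion (fun l => Finset.Ico (lo l) (hi l))).card := by
      rw [Finset.card_biUnion]
      · simp
      · intro l hl l' hl' hne
        rcases lt_or_gt_of_ne hne with h1 | h1
        · exact hdis l hl l' hl' h1
        · exact (hdis l' hl' l hl h1).symm
    rw [hc]
    have : ((M.image g).biUnion (fun l => Finset.Ico (lo l) (hi l))) ⊆ Finset.Ico s (s + n) := by
      intro x hx
      simp only [Finset.mem_biUnion, Finset.mem_Ico] at hx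
      obtain ⟨l, hl, hx⟩ := hx
      obtain ⟨_, ⟨p, hp, hpl, hpf⟩, ⟨q, hq, hql, hqf⟩⟩ := h l hl
      have := hf p hp
      have := hf q hq
      simp only [Finset.mem_Ico]
      omega
    simpa using Finset.card_le_card this

theorem periodic_count (N r a b i : ℕ) (hr : 0 < r) (P : Finset ℕ)
    (hP : ∀ p ∈ P, a ≤ p ∧ p < b ∧ p / r % N = i) : N * P.card ≤ (b - a) + N * r := by
  have : (P ×ˢ Finset.range N).card ≤ (Finset.Ico a (b + N * r)).card := by
    apply Finset.card_le_card_of_injOn (fun x => x.1 + x.2 * r)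
    · rintro ⟨p, t⟩ hx
      simp only [Finset.coe_product, Set.mem_prod, Finset.mem_coe, Finset.mem_range] at hx
      have h1 := hP p hx.1
      have h2 : t * r ≤ N * r := Nat.mul_le_mul_right _ hx.2.le
      simp only [Finset.coe_Ico, Set.mem_Ico]
      omega
    · rintro ⟨p, t⟩ hx ⟨p', t'⟩ hx' heq
      simp only [Finset.coe_product, Set.mem_prod, Finset.mem_coe, Finset.mem_range] at hx hx' heq
      have h1 := (hP p hx.1).2.2
      have h2 := (hP p' hx'.1).2.2
      have h3 : (p + t * r) / r = (p' + t' * r) / r := by rw [heq]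
      rw [Nat.add_mul_div_right _ _ hr, Nat.add_mul_div_right _ _ hr] at h3
      have h4 : p / r + t ≡ p' / r + t' [MOD N] := by rw [h3]
      have h5 : t ≡ t' [MOD N] := Nat.ModEq.add_left_cancel (h1.trans h2.symm) h4
      have h6 : t = t' := h5.eq_of_lt_of_lt hx.2 hx'.2
      subst h6
      ext
      · simpa using heq
      · rfl
  rw [Finset.card_product, Finset.card_range, Nat.card_Ico] at this
  rcases P.eq_empty_or_nonempty with rfl | ⟨p, hp⟩
  · simp
  · have := hP p hp
    rw [Nat.mul_comm]
    omega

theorem flatten_getElem {α : Type*} (c : ℕ) (ls : List (List α)) (h : ∀ l ∈ ls, l.length = c)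
    (p : ℕ) (hp : p < ls.length * c) : ls.flatten[p]? = (ls[p / c]?).bind (fun l => l[p % c]?) := by
  induction ls generalizing p with
  | nil => simp at hp
  | cons l ls ih =>
    have hl : l.length = c := h l (by simp)
    have hc : 0 < c := by
      rcases Nat.eq_zero_or_pos c with h0 | h0
      · simp [h0] at hp
      · exact h0
    rw [List.flatten_cons]
    by_cases hpc : p < c
    · rw [List.getElem?_append_left (by omega), Nat.div_eq_of_lt hpc, Nat.mod_eq_of_lt hpc]
      simp
    · obtain ⟨q, rfl⟩ : ∃ q, p = q + c := ⟨p - c, by omega⟩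
      rw [List.getElem?_append_right (by omega), hl, Nat.add_sub_cancel,
        ih (fun l' hl' => h l' (by simp [hl'])) q
          (by simp only [List.length_cons, Nat.add_mul] at hp; omega),
        Nat.add_div_right _ hc, Nat.add_mod_right]
      simp

theorem repeatList_length {α : Type*} (w : List α) (k : ℕ) :
    (repeatList w k).length = k * w.length := by
  simp [repeatList]

theorem repeatList_getElem {α : Type*} (w : List α) (k p : ℕ) (hp : p < k * w.length) :
    (repeatList w k)[p]? = w[p % w.length]? := by
  unfold repeatList
  rw [flatten_getElem w.length _ (by intro l hl; rw [List.eq_of_mem_replicate hl]) p (by simpa using hp)]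
  have : p / w.length < k := Nat.div_lt_of_lt_mul (by rwa [Nat.mul_comm])
  simp [this]

theorem feldman_getElem {α : Type*} (T N M L : ℕ) (A : ℕ → List α)
    (hA : ∀ i, 1 ≤ i → i ≤ N → (A i).length = L) (r p : ℕ)
    (hp : p < (feldmanPattern T N M A r).length) :
    (feldmanPattern T N M A r)[p]?
      = (A (p / (T * N ^ (2 * r) * L) % N + 1))[p % L]? := by
  set t := T * N ^ (2 * r) with ht
  have hlen : ∀ l ∈ (List.range N).map (fun i => repeatList (A (i + 1)) t), l.length = t * L := by
    intro l hl
    simp only [List.mem_map, List.mem_range] at hl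
    obtain ⟨i, hi, rfl⟩ := hl
    rw [repeatList_length, hA _ (by omega) (by omega)]
  have hcl : ((List.range N).map (fun i => repeatList (A (i + 1)) t)).flatten.length
      = t * L * N := by
    rw [List.length_flatten, List.map_congr_left (g := fun _ => t * L) hlen]
    simp [Nat.mul_comm, Function.comp_def]
  unfold feldmanPattern at hp ⊢
  rw [← ht] at hp ⊢
  rw [repeatList_length] at hp
  rw [repeatList_getElem _ _ _ hp, hcl]
  rw [hcl] at hp
  have hpos : 0 < t * L * N := by
    rcases Nat.eq_zero_or_pos (t * L * N) with h0 | h0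
    · simp [h0] at hp
    · exact h0
  have hN : 0 < N := Nat.pos_of_mul_pos_left hpos
  have hml := Nat.mod_lt p hpos
  rw [flatten_getElem (t * L) _ hlen _ (by simpa [Nat.mul_comm] using hml)]
  rw [Nat.mod_mul_right_div_self, Nat.mod_mul_right_mod]
  have hi : p / (t * L) % N < N := Nat.mod_lt _ hN
  have hAl := hA (p / (t * L) % N + 1) (by omega) (by omega)
  simp only [List.getElem?_map, List.getElem?_range hi, Option.map_some, Option.bind_some]
  rw [repeatList_getElem, hAl, Nat.mod_mul_left_mod]
  rw [hAl]
  exact Nat.mod_lt _ (Nat.pos_of_mul_pos_right hpos)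

theorem nat_add_div_le (a b c : ℕ) : (a + b) / c ≤ a / c + b / c + 1 := by
  rcases Nat.eq_zero_or_pos c with rfl | hc
  · simp
  · rw [Nat.add_div hc]
    split_ifs <;> omega

set_option maxHeartbeats 1000000 in
theorem core {S : Type*} (N L t t' : ℕ) (hN : 0 < N) (hL : 0 < L) (ht : 0 < t) (ht' : 0 < t')
    (A : ℕ → List S) (hA : ∀ i, 1 ≤ i → i ≤ N → (A i).length = L)
    (α : ℝ) (hα0 : 0 < α) (hα7 : α < 1 / 7) (R : ℝ) (hR : 2 ≤ R)
    (hsep : ∀ i₁ i₂, 1 ≤ i₁ → i₁ ≤ N → 1 ≤ i₂ → i₂ ≤ N → i₁ ≠ i₂ →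
      ∀ C D : List S, C <:+: A i₁ → D <:+: A i₂ →
        (L : ℝ) / R ≤ (C.length : ℝ) → (L : ℝ) / R ≤ (D.length : ℝ) → fbar C D > α)
    (B B' : List S) (s s' : ℕ)
    (hB : ∀ p < B.length, B[p]? = (A ((s + p) / (t * L) % N + 1))[(s + p) % L]?)
    (hB' : ∀ p < B'.length, B'[p]? = (A ((s' + p) / (t' * L) % N + 1))[(s' + p) % L]?)
    (M : Finset (ℕ × ℕ)) (hM : IsMatch B B' M) :
    (M.card : ℝ) ≤ (1 - α) / 2 * (B.length + B'.length)
      + α * (B.length / N + t * L * (B'.length / (t' * L) + 2))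
      + α * (L / R) * (B.length / L + B'.length / L + 3) := by
  classical
  set n := B.length with hn
  set m := B'.length with hm
  -- absolute coordinates and labels
  let g : ℕ × ℕ → ℕ := fun p => (s + p.1) / L + (s' + p.2) / L
  let w : ℕ × ℕ → ℕ := fun p => (s' + p.2) / (t' * L)
  let bad : ℕ × ℕ → Prop := fun p => (s + p.1) / (t * L) % N = (s' + p.2) / (t' * L) % N
  have hord : ∀ p ∈ M, ∀ q ∈ M, (p.1 < q.1 ∧ p.2 < q.2) ∨ (q.1 < p.1 ∧ q.2 < p.2) ∨ p = q := by
    intro p hp q hq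
    have h1 := hM.2 p hp q hq
    have h2 := hM.2 q hq p hp
    rcases lt_trichotomy p.1 q.1 with h | h | h
    · exact Or.inl ⟨h, h1.1 h⟩
    · right; right; ext
      · exact h
      · omega
    · exact Or.inr (Or.inl ⟨h, h2.1 h⟩)
  have hgmono : ∀ p q : ℕ × ℕ, p.1 ≤ q.1 → p.2 ≤ q.2 →
      (s + p.1) / L ≤ (s + q.1) / L ∧ (s' + p.2) / L ≤ (s' + q.2) / L := by
    intro p q h1 h2
    exact ⟨Nat.div_le_div_right (by omega), Nat.div_le_div_right (by omega)⟩
  have hg1 : ∀ p ∈ M, ∀ q ∈ M, g p < g q → p.1 < q.1 ∧ p.2 < q.2 := by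
    intro p hp q hq hlt
    rcases hord p hp q hq with h | h | h
    · exact h
    · have := hgmono q p h.1.le h.2.le
      simp only [g] at hlt; omega
    · subst h; omega
  have hgeq : ∀ p ∈ M, ∀ q ∈ M, g p = g q →
      (s + p.1) / L = (s + q.1) / L ∧ (s' + p.2) / L = (s' + q.2) / L := by
    intro p hp q hq heq
    rcases hord p hp q hq with h | h | h
    · have := hgmono p q h.1.le h.2.le
      simp only [g] at heq; omega
    · have := hgmono q p h.1.le h.2.le
      simp only [g] at heq; omega
    · subst h; simp
  have hw1 : ∀ p ∈ M, ∀ q ∈ M, w p < w q → p.1 < q.1 := by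
    intro p hp q hq hlt
    have : s' + p.2 < s' + q.2 := by
      by_contra hcon
      have := Nat.div_le_div_right (c := t' * L) (not_lt.1 hcon)
      simp only [w] at hlt; omega
    exact (hM.2 p hp q hq).2 (by omega)
  obtain ⟨lo, hi, hlh, hatt, hsum⟩ := hull_lemma M (fun p => p.1) g 0 n
    (fun p hp => ⟨by omega, by have := (hM.1 p hp).1; omega⟩)
    (fun p hp q hq h => (hg1 p hp q hq h).1)
  obtain ⟨lo', hi', hlh', hatt', hsum'⟩ := hull_lemma M (fun p => p.2) g 0 m
    (fun p hp => ⟨by omega, by have := (hM.1 p hp).2.1; omega⟩)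
    (fun p hp q hq h => (hg1 p hp q hq h).2)
  obtain ⟨lw, hw, hlhw, hattw, hsumw⟩ := hull_lemma M (fun p => p.1) w 0 n
    (fun p hp => ⟨by omega, by have := (hM.1 p hp).1; omega⟩) hw1
  -- the number of bad pairs
  have hbadcard : ((M.filter bad).card : ℝ) ≤ n / N + t * L * (m / (t' * L) + 2) := by
    have h1 : ∀ l ∈ M.image w,
        N * ((M.filter bad).filter (fun p => w p = l)).card ≤ (hw l - lw l) + N * (t * L) := by
      intro l hl
      have hinj : Set.InjOn Prod.fst ((((M.filter bad).filter (fun p => w p = l)) : Finset (ℕ × ℕ)) : Set (ℕ × ℕ)) := by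
        intro p hp q hq hpq
        simp only [Finset.coe_filter, Finset.mem_filter, Set.mem_ofPred_eq] at hp hq
        rcases hord p hp.1.1 q hq.1.1 with h | h | h
        · omega
        · omega
        · exact h
      have hinj2 : Function.Injective (fun x : ℕ => s + x) := fun x y h => by simpa using h
      rw [← Finset.card_image_of_injOn hinj, ← Finset.card_image_of_injective _ hinj2]
      have := periodic_count N (t * L) (s + lw l) (s + hw l) (l % N) (by positivity)
        ((((M.filter bad).filter (fun p => w p = l)).image Prod.fst).image (fun x => s + x)) (by
          intro x hx
          simp only [Finset.mem_image, Finset.mem_filter] at hx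
          obtain ⟨y, ⟨p, ⟨⟨hpM, hpb⟩, hpl⟩, rfl⟩, rfl⟩ := hx
          have h2 := hlhw p hpM
          rw [hpl] at h2
          refine ⟨by omega, by omega, ?_⟩
          rw [← hpl]
          exact hpb)
      omega
    have h2 : (M.filter bad).card
        = ∑ l ∈ M.image w, ((M.filter bad).filter (fun p => w p = l)).card := by
      apply Finset.card_eq_sum_card_fiberwise
      intro p hp
      simp only [Finset.coe_filter, Set.mem_ofPred_eq] at hp
      exact Finset.mem_coe.2 (Finset.mem_image_of_mem _ hp.1)
    have h3 : N * (M.filter bad).card ≤ n + (M.image w).card * (N * (t * L)) := by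
      rw [h2, Finset.mul_sum]
      refine (Finset.sum_le_sum h1).trans ?_
      rw [Finset.sum_add_distrib, Finset.sum_const, smul_eq_mul]
      omega
    have h4 : (M.image w).card ≤ m / (t' * L) + 2 := by
      have : M.image w ⊆ Finset.Ico (s' / (t' * L)) (s' / (t' * L) + (m / (t' * L) + 2)) := by
        intro l hl
        obtain ⟨p, hp, rfl⟩ := Finset.mem_image.1 hl
        have hp2 := (hM.1 p hp).2.1
        have e1 : s' / (t' * L) ≤ (s' + p.2) / (t' * L) := Nat.div_le_div_right (by omega)
        have e2 : (s' + p.2) / (t' * L) ≤ (s' + m) / (t' * L) := Nat.div_le_div_right (by omega)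
        have e3 : (s' + m) / (t' * L) ≤ s' / (t' * L) + m / (t' * L) + 1 :=
          nat_add_div_le s' m (t' * L)
        simp only [Finset.mem_Ico, w]
        omega
      simpa using Finset.card_le_card this
    have h5 : ((M.image w).card : ℝ) ≤ m / (t' * L) + 2 := by
      have e1 : ((M.image w).card : ℝ) ≤ ((m / (t' * L) : ℕ) : ℝ) + 2 := by exact_mod_cast h4
      have e2 : ((m / (t' * L) : ℕ) : ℝ) ≤ (m : ℝ) / ((t' * L : ℕ) : ℝ) := Nat.cast_div_le
      push_cast at e2
      linarith
    have h6 : (N : ℝ) * (M.filter bad).card ≤ n + (M.image w).card * (N * (t * L)) := by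
      exact_mod_cast h3
    have hN' : (0 : ℝ) < N := by exact_mod_cast hN
    have h7 : ((M.image w).card : ℝ) * (N * (t * L)) ≤ (m / (t' * L) + 2) * (N * (t * L)) :=
      mul_le_mul_of_nonneg_right h5 (by positivity)
    have h8 : (N : ℝ) * (M.filter bad).card ≤ N * (n / N + t * L * (m / (t' * L) + 2)) := by
      have : (N : ℝ) * (n / N + t * L * (m / (t' * L) + 2))
        = n + (m / (t' * L) + 2) * (N * (t * L)) := by
        rw [mul_add, mul_div_cancel₀ _ hN'.ne']
        ring
      linarith
    exact le_of_mul_le_mul_left h8 hN'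
  have hlabels : ((M.image g).card : ℝ) ≤ n / L + m / L + 3 := by
    have h4 : (M.image g).card ≤ n / L + m / L + 3 := by
      have : M.image g ⊆ Finset.Ico (s / L + s' / L) (s / L + s' / L + (n / L + m / L + 3)) := by
        intro l hl
        obtain ⟨p, hp, rfl⟩ := Finset.mem_image.1 hl
        have hp1 := (hM.1 p hp).1
        have hp2 := (hM.1 p hp).2.1
        have e1 : s' / L ≤ (s' + p.2) / L := Nat.div_le_div_right (by omega)
        have e2 : (s' + p.2) / L ≤ (s' + m) / L := Nat.div_le_div_right (by omega)
        have e3 : (s' + m) / L ≤ s' / L + m / L + 1 := nat_add_div_le s' m L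
        have e1 : s / L ≤ (s + p.1) / L := Nat.div_le_div_right (by omega)
        have e2 : (s + p.1) / L ≤ (s + n) / L := Nat.div_le_div_right (by omega)
        have e3 : (s + n) / L ≤ s / L + n / L + 1 := nat_add_div_le s n L
        simp only [Finset.mem_Ico, g]
        omega
      simpa using Finset.card_le_card this
    have e1 : ((M.image g).card : ℝ) ≤ ((n / L : ℕ) : ℝ) + ((m / L : ℕ) : ℝ) + 3 := by
      exact_mod_cast h4
    have e2 : ((n / L : ℕ) : ℝ) ≤ (n : ℝ) / L := Nat.cast_div_le
    have e3 : ((m / L : ℕ) : ℝ) ≤ (m : ℝ) / L := Nat.cast_div_le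
    linarith
  have hR0 : (0 : ℝ) < R := by linarith
  have hLR : (0 : ℝ) ≤ L / R := by positivity
  -- bound for each label
  have hlab : ∀ l ∈ M.image g, ((M.filter (fun p => g p = l)).card : ℝ)
      ≤ (1 - α) / 2 * (((hi l - lo l : ℕ) : ℝ) + ((hi' l - lo' l : ℕ) : ℝ))
        + α * (((M.filter bad).filter (fun p => g p = l)).card : ℝ) + α * (L / R) := by
    intro l hl
    obtain ⟨⟨pa, hpa, hpal, hpaf⟩, ⟨pb, hpb, hpbl, hpbf⟩⟩ := hatt l hl
    obtain ⟨⟨qa, hqa, hqal, hqaf⟩, ⟨qb, hqb, hqbl, hqbf⟩⟩ := hatt' l hl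
    set F := M.filter (fun p => g p = l) with hF
    have hFmem : ∀ p ∈ F, p ∈ M ∧ g p = l := by
      intro p hp; exact Finset.mem_filter.1 hp
    have hFlo : ∀ p ∈ F, lo l ≤ p.1 ∧ p.1 < hi l ∧ lo' l ≤ p.2 ∧ p.2 < hi' l := by
      intro p hp
      obtain ⟨h1, h2⟩ := hFmem p hp
      have h3 := hlh p h1
      have h4 := hlh' p h1
      rw [h2] at h3 h4
      exact ⟨h3.1, h3.2, h4.1, h4.2⟩
    have hFlab : ∀ p ∈ F, (s + p.1) / L = (s + pa.1) / L ∧ (s' + p.2) / L = (s' + pa.2) / L := by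
      intro p hp
      obtain ⟨h1, h2⟩ := hFmem p hp
      exact hgeq p h1 pa hpa (by omega)
    set u := (s + pa.1) / L with hu
    set v := (s' + pa.2) / L with hv
    -- block indices
    set i := u / t % N with hi_def
    set i' := v / t' % N with hi'_def
    have hidx : ∀ p ∈ F, (s + p.1) / (t * L) % N = i ∧ (s' + p.2) / (t' * L) % N = i' := by
      intro p hp
      obtain ⟨h1, h2⟩ := hFlab p hp
      rw [Nat.mul_comm t, Nat.mul_comm t', ← Nat.div_div_eq_div_mul, ← Nat.div_div_eq_div_mul, h1, h2]
      exact ⟨rfl, rfl⟩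
    have hbnd : ∀ p ∈ F, L * u ≤ s + p.1 ∧ s + p.1 < L * u + L ∧
        L * v ≤ s' + p.2 ∧ s' + p.2 < L * v + L ∧
        (s + p.1) % L = s + p.1 - L * u ∧ (s' + p.2) % L = s' + p.2 - L * v := by
      intro p hp
      obtain ⟨h1, h2⟩ := hFlab p hp
      have e1 := Nat.div_add_mod (s + p.1) L
      have e2 := Nat.div_add_mod (s' + p.2) L
      have e3 := Nat.mod_lt (s + p.1) hL
      have e4 := Nat.mod_lt (s' + p.2) hL
      rw [h1] at e1
      rw [h2] at e2
      omega
    have hpaF : pa ∈ F := Finset.mem_filter.2 ⟨hpa, hpal⟩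
    have hpbF : pb ∈ F := Finset.mem_filter.2 ⟨hpb, hpbl⟩
    have hqaF : qa ∈ F := Finset.mem_filter.2 ⟨hqa, hqal⟩
    have hqbF : qb ∈ F := Finset.mem_filter.2 ⟨hqb, hqbl⟩
    have bpa := hbnd pa hpaF
    have bpb := hbnd pb hpbF
    have bqa := hbnd qa hqaF
    have bqb := hbnd qb hqbF
    set C := ((A (i + 1)).drop (s + lo l - L * u)).take (hi l - lo l) with hC
    set D := ((A (i' + 1)).drop (s' + lo' l - L * v)).take (hi' l - lo' l) with hD
    have hiN : i < N := Nat.mod_lt _ hN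
    have hi'N : i' < N := Nat.mod_lt _ hN
    have hCl : C.length = hi l - lo l := by
      rw [hC, List.length_take, List.length_drop, hA _ (by omega) (by omega)]
      omega
    have hDl : D.length = hi' l - lo' l := by
      rw [hD, List.length_take, List.length_drop, hA _ (by omega) (by omega)]
      omega
    have hCi : C <:+: A (i + 1) := (List.take_prefix _ _).isInfix.trans (List.drop_suffix _ _).isInfix
    have hDi : D <:+: A (i' + 1) := (List.take_prefix _ _).isInfix.trans (List.drop_suffix _ _).isInfix
    have hFcard : F.card ≤ maxMatch C D := by
      have hinj : Set.InjOn (fun p : ℕ × ℕ => (p.1 - lo l, p.2 - lo' l)) (F : Set (ℕ × ℕ)) := by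
        intro p hp q hq hpq
        have h1 := hFlo p hp
        have h2 := hFlo q hq
        simp only [Prod.mk.injEq] at hpq
        ext <;> omega
      rw [← Finset.card_image_of_injOn hinj]
      apply card_le_maxMatch
      constructor
      · intro x hx
        obtain ⟨p, hp, rfl⟩ := Finset.mem_image.1 hx
        have h1 := hFlo p hp
        have h2 := hM.1 p (hFmem p hp).1
        have h3 := hbnd p hp
        refine ⟨by rw [hCl]; simp only; omega, by rw [hDl]; simp only; omega, ?_⟩
        have h4 := hB p.1 h2.1
        have h5 := hB' p.2 h2.2.1
        rw [(hidx p hp).1, h3.2.2.2.2.1] at h4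
        rw [(hidx p hp).2, h3.2.2.2.2.2] at h5
        simp only [hC, hD]
        rw [List.getElem?_take_of_lt (by omega), List.getElem?_take_of_lt (by omega),
          List.getElem?_drop, List.getElem?_drop]
        have e1 : s + lo l - L * u + (p.1 - lo l) = s + p.1 - L * u := by omega
        have e2 : s' + lo' l - L * v + (p.2 - lo' l) = s' + p.2 - L * v := by omega
        rw [e1, e2, ← h4, ← h5]
        exact h2.2.2
      · intro x hx y hy
        obtain ⟨p, hp, rfl⟩ := Finset.mem_image.1 hx
        obtain ⟨q, hq, rfl⟩ := Finset.mem_image.1 hy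
        have h1 := hFlo p hp
        have h2 := hFlo q hq
        have h3 := hM.2 p (hFmem p hp).1 q (hFmem q hq).1
        simp only
        omega
    -- trivial bounds
    have hmC : maxMatch C D ≤ C.length := by
      obtain ⟨Q, hQ, hQc⟩ := exists_maxMatch C D
      rw [← hQc]; exact isMatch_card_le hQ
    have hmD : maxMatch C D ≤ D.length := by
      refine (maxMatch_le_swap C D).trans ?_
      obtain ⟨Q, hQ, hQc⟩ := exists_maxMatch D C
      rw [← hQc]; exact isMatch_card_le hQ
    have hx : (F.card : ℝ) ≤ ((hi l - lo l : ℕ) : ℝ) := by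
      rw [← hCl]; exact_mod_cast hFcard.trans hmC
    have hy : (F.card : ℝ) ≤ ((hi' l - lo' l : ℕ) : ℝ) := by
      rw [← hDl]; exact_mod_cast hFcard.trans hmD
    set x : ℝ := ((hi l - lo l : ℕ) : ℝ) with hxdef
    set y : ℝ := ((hi' l - lo' l : ℕ) : ℝ) with hydef
    have hgen : (F.card : ℝ) ≤ (1 - α) / 2 * (x + y) + α * F.card := by
      nlinarith
    have hbn : (0 : ℝ) ≤ α * (((M.filter bad).filter (fun p => g p = l)).card : ℝ) :=
      mul_nonneg hα0.le (Nat.cast_nonneg _)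
    have hLRn : 0 ≤ α * (L / R) := mul_nonneg hα0.le hLR
    by_cases hii : i = i'
    · have : (M.filter bad).filter (fun p => g p = l) = F := by
        rw [hF]
        ext p
        simp only [Finset.mem_filter]
        constructor
        · rintro ⟨⟨h1, _⟩, h2⟩; exact ⟨h1, h2⟩
        · rintro ⟨h1, h2⟩
          have hpF : p ∈ F := Finset.mem_filter.2 ⟨h1, h2⟩
          have := hidx p hpF
          refine ⟨⟨h1, ?_⟩, h2⟩
          simp only [bad]
          rw [this.1, this.2, hii]
      rw [this]
      linarith
    · by_cases hshort : (F.card : ℝ) ≤ L / R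
      · have : α * F.card ≤ α * (L / R) := mul_le_mul_of_nonneg_left hshort hα0.le
        linarith
      · push Not at hshort
        have := hsep (i + 1) (i' + 1) (by omega) (by omega) (by omega) (by omega) (by omega)
          C D hCi hDi (by rw [hCl]; linarith) (by rw [hDl]; linarith)
        unfold fbar at this
        rw [hCl, hDl, ← hxdef, ← hydef] at this
        have hxy : 0 < x + y := by linarith
        have h1 : 2 * (maxMatch C D : ℝ) / (x + y) < 1 - α := by linarith
        rw [div_lt_iff₀ hxy] at h1
        have h2 : (F.card : ℝ) ≤ maxMatch C D := by exact_mod_cast hFcard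
        linarith
  have hMc : M.card = ∑ l ∈ M.image g, (M.filter (fun p => g p = l)).card :=
    Finset.card_eq_sum_card_fiberwise (fun p hp => Finset.mem_coe.2 (Finset.mem_image_of_mem _ hp))
  have hbc : (M.filter bad).card
      = ∑ l ∈ M.image g, ((M.filter bad).filter (fun p => g p = l)).card := by
    apply Finset.card_eq_sum_card_fiberwise
    intro p hp
    simp only [Finset.coe_filter, Set.mem_ofPred_eq] at hp
    exact Finset.mem_coe.2 (Finset.mem_image_of_mem _ hp.1)
  have htot := Finset.sum_le_sum hlab
  rw [Finset.sum_add_distrib, Finset.sum_add_distrib, ← Finset.mul_sum, ← Finset.mul_sum,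
    Finset.sum_add_distrib, Finset.sum_const, nsmul_eq_mul, ← Nat.cast_sum, ← Nat.cast_sum,
    ← Nat.cast_sum, ← Nat.cast_sum, ← hMc, ← hbc] at htot
  have hs1 : ((∑ l ∈ M.image g, (hi l - lo l) : ℕ) : ℝ) ≤ n := by exact_mod_cast hsum
  have hs2 : ((∑ l ∈ M.image g, (hi' l - lo' l) : ℕ) : ℝ) ≤ m := by exact_mod_cast hsum'
  have hq1 := mul_le_mul_of_nonneg_left (add_le_add hs1 hs2) (by linarith : (0 : ℝ) ≤ (1 - α) / 2)
  have hq2 := mul_le_mul_of_nonneg_left hbadcard hα0.le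
  have hq3 := mul_le_mul_of_nonneg_left hlabels (mul_nonneg hα0.le hLR)
  linarith

theorem infix_coords {S : Type*} {B P : List S} (h : B <:+: P) :
    ∃ s, ∀ p < B.length, s + p < P.length ∧ B[p]? = P[s + p]? := by
  obtain ⟨X, Y, rfl⟩ := h
  refine ⟨X.length, fun p hp => ⟨by simp; omega, ?_⟩⟩
  rw [List.append_assoc, List.getElem?_append_right (by omega), Nat.add_sub_cancel_left,
    List.getElem?_append_left hp]

theorem main_lt {S : Type*} (T N M L : ℕ)
    (hT : 0 < T) (hN : 20 ≤ N) (hL : 0 < L)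
    (A : ℕ → List S) (hA : ∀ i, 1 ≤ i → i ≤ N → (A i).length = L)
    (α : ℝ) (hα0 : 0 < α) (hα7 : α < 1 / 7) (R : ℝ) (hR : 2 ≤ R)
    (hsep : ∀ i₁ i₂, 1 ≤ i₁ → i₁ ≤ N → 1 ≤ i₂ → i₂ ≤ N → i₁ ≠ i₂ →
      ∀ C D : List S, C <:+: A i₁ → D <:+: A i₂ →
        (L : ℝ) / R ≤ (C.length : ℝ) → (L : ℝ) / R ≤ (D.length : ℝ) → fbar C D > α)
    (j k : ℕ) (hkM : k ≤ M) (hjk : j < k)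
    (B B' : List S) (hB : B <:+: feldmanPattern T N M A j) (hB' : B' <:+: feldmanPattern T N M A k)
    (hBl : T * N ^ (2 * M + 2) * L ≤ B.length) (hBl' : T * N ^ (2 * M + 2) * L ≤ B'.length) :
    fbar B B' ≥ α - 4 / Real.sqrt (N : ℝ) - 1 / R := by
  obtain ⟨s, hs⟩ := infix_coords hB
  obtain ⟨s', hs'⟩ := infix_coords hB'
  obtain ⟨Q, hQ, hQc⟩ := exists_maxMatch B B'
  have hN0 : 0 < N := by omega
  set t := T * N ^ (2 * j) with ht
  set t' := T * N ^ (2 * k) with ht'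
  have htp : 0 < t := by positivity
  have htp' : 0 < t' := by positivity
  have hcore := core N L t t' hN0 hL htp htp' A hA α hα0 hα7 R hR hsep B B' s s'
    (fun p hp => by rw [(hs p hp).2, feldman_getElem T N M L A hA j _ (hs p hp).1])
    (fun p hp => by rw [(hs' p hp).2, feldman_getElem T N M L A hA k _ (hs' p hp).1]) Q hQ
  rw [hQc] at hcore
  have htt : t * N ≤ t' := by
    rw [ht, ht', Nat.mul_assoc, ← pow_succ]
    exact Nat.mul_le_mul_left _ (Nat.pow_le_pow_right hN0 (by omega))
  have htl : t * L * N ≤ B.length := by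
    refine le_trans ?_ hBl
    rw [Nat.mul_right_comm]
    apply Nat.mul_le_mul_right
    rw [ht, Nat.mul_assoc, ← pow_succ]
    exact Nat.mul_le_mul_left _ (Nat.pow_le_pow_right hN0 (by omega))
  have htl' : t * L * N ≤ B'.length := by
    refine le_trans ?_ hBl'
    rw [Nat.mul_right_comm]
    apply Nat.mul_le_mul_right
    rw [ht, Nat.mul_assoc, ← pow_succ]
    exact Nat.mul_le_mul_left _ (Nat.pow_le_pow_right hN0 (by omega))
  have hLl : L ≤ t * L * N := by
    have : 1 ≤ t * N := Nat.mul_pos htp hN0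
    nlinarith
  set n : ℝ := (B.length : ℝ) with hn
  set m : ℝ := (B'.length : ℝ) with hm
  have hNr : (0 : ℝ) < N := by exact_mod_cast hN0
  have hLr : (0 : ℝ) < L := by exact_mod_cast hL
  have htr : (0 : ℝ) < t := by exact_mod_cast htp
  have htr' : (0 : ℝ) < t' := by exact_mod_cast htp'
  have r1 : (t : ℝ) * N ≤ t' := by exact_mod_cast htt
  have r2 : (t : ℝ) * L * N ≤ n := by rw [hn]; exact_mod_cast htl
  have r3 : (t : ℝ) * L * N ≤ m := by rw [hm]; exact_mod_cast htl'
  have r4 : (L : ℝ) ≤ t * L * N := by exact_mod_cast hLl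
  have hR0 : (0 : ℝ) < R := by linarith
  have hm0 : 0 < m := by linarith
  have hX : 0 < n + m := by linarith
  have hsq : 0 < Real.sqrt (N : ℝ) := Real.sqrt_pos.2 hNr
  have hsqle : 1 / (N : ℝ) ≤ 1 / Real.sqrt (N : ℝ) := by
    apply one_div_le_one_div_of_le hsq
    rw [Real.sqrt_le_left hNr.le]
    have : (20 : ℝ) ≤ N := by exact_mod_cast hN
    nlinarith
  -- first error term
  have e1 : n / N + t * L * (m / (t' * L) + 2) ≤ 2 * (n + m) * (1 / N) := by
    have a1 : (t : ℝ) * L * (m / (t' * L)) ≤ m * (1 / N) := by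
      have : (t : ℝ) * L * (m / (t' * L)) = m * (t / t') := by field_simp
      rw [this]
      apply mul_le_mul_of_nonneg_left _ hm0.le
      rw [div_le_div_iff₀ htr' hNr]
      linarith
    have a2 : (t : ℝ) * L * 2 ≤ (n + m) * (1 / N) := by
      rw [mul_one_div, le_div_iff₀ hNr]
      linarith
    have a3 : n / N = n * (1 / N) := by rw [mul_one_div]
    rw [a3]
    linarith
  have e2 : α * (n / N + t * L * (m / (t' * L) + 2)) ≤ 2 * (n + m) * (1 / Real.sqrt (N : ℝ)) := by
    have b1 : 0 ≤ n / N + t * L * (m / (t' * L) + 2) := by positivity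
    have b2 : 2 * (n + m) * (1 / N) ≤ 2 * (n + m) * (1 / Real.sqrt (N : ℝ)) :=
      mul_le_mul_of_nonneg_left hsqle (by linarith)
    have b3 := mul_le_mul_of_nonneg_right (by linarith : α ≤ 1) b1
    linarith
  have e3 : α * (L / R) * (n / L + m / L + 3) ≤ (n + m) / 2 * (1 / R) := by
    have c1 : α * (L / R) * (n / L + m / L + 3) = α * (n + m + 3 * L) * (1 / R) := by
      field_simp
    rw [c1]
    apply mul_le_mul_of_nonneg_right _ (by positivity)
    have c2 : 0 ≤ n + m + 3 * L := by positivity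
    have c3 := mul_le_mul_of_nonneg_right hα7.le c2
    linarith
  unfold fbar
  rw [← hn, ← hm]
  have hfin : 2 * (maxMatch B B' : ℝ) / (n + m) ≤ 1 - α + 4 / Real.sqrt (N : ℝ) + 1 / R := by
    rw [div_le_iff₀ hX]
    have : (4 : ℝ) / Real.sqrt (N : ℝ) = 4 * (1 / Real.sqrt (N : ℝ)) := by ring
    rw [this]
    linarith
  linarith

/-- `f̄`-separation of distinct Feldman patterns: substantial substrings of Feldman
patterns of different types in `α`-separated building blocks are `(α − 4/√N − 1/R)`-apart. -/
theorem fbar_feldman_patterns {S : Type*} (T N M L : ℕ)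
    (hT : 0 < T) (hN : 20 ≤ N) (hM : 2 ≤ M) (hL : 0 < L)
    (A : ℕ → List S) (hA : ∀ i, 1 ≤ i → i ≤ N → (A i).length = L)
    (α : ℝ) (hα0 : 0 < α) (hα7 : α < 1 / 7) (R : ℝ) (hR : 2 ≤ R)
    (hsep : ∀ i₁ i₂, 1 ≤ i₁ → i₁ ≤ N → 1 ≤ i₂ → i₂ ≤ N → i₁ ≠ i₂ →
      ∀ C D : List S, C <:+: A i₁ → D <:+: A i₂ →
        (L : ℝ) / R ≤ (C.length : ℝ) → (L : ℝ) / R ≤ (D.length : ℝ) → fbar C D > α) :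
    ∀ j k, 1 ≤ j → j ≤ M → 1 ≤ k → k ≤ M → j ≠ k →
      ∀ B B' : List S, B <:+: feldmanPattern T N M A j → B' <:+: feldmanPattern T N M A k →
        T * N ^ (2 * M + 2) * L ≤ B.length → T * N ^ (2 * M + 2) * L ≤ B'.length →
        fbar B B' ≥ α - 4 / Real.sqrt (N : ℝ) - 1 / R := by
  intro j k _ hjM _ hkM hjk B B' hB hB' hBl hBl'
  rcases lt_or_gt_of_ne hjk with h | h
  · exact main_lt T N M L hT hN hL A hA α hα0 hα7 R hR hsep j k hkM h B B' hB hB' hBl hBl'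
  · rw [fbar_swap]
    exact main_lt T N M L hT hN hL A hA α hα0 hα7 R hR hsep k j hjM h B' B hB' hB hBl' hBl
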